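/- Let Y be a normed space, let M ≥ 1 and n ≥ 0 be integers, and let A_1, …, A_M be subsets of Y. Then the Kolmogorov widths satisfy d_{Mn}(A_1 ∪ ⋯ ∪ A_M)_Y ≤ max_{1≤i≤M} d_n(A_i)_Y. -/

import Mathlib

/-- The Kolmogorov `n`-width of a subset `K` of a complex normed space `Y`:
the infimum over all `n`-dimensional subspaces `W` of `Y` of the deviation
`sup_{v ∈ K} inf_{w ∈ W} ‖v - w‖`. -/
noncomputable def kolWidth {Y : Type*} [NormedAddCommGroup Y] [NormedSpace ℂ Y]
    (n : ℕ) (K : Set Y) : ℝ :=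
  ⨅ W : {W : Submodule ℂ Y // Module.finrank ℂ ↥W = n},
    ⨆ x : K, ⨅ w : ↥W.1, ‖(x : Y) - (w : Y)‖

/-!
Choose `n`-dimensional subspaces `W i` nearly optimal for the sets `A i`. Their sum has dimension
at most `M * n`, and any `M * n`-dimensional subspace containing it approximates every point of
`⋃ i, A i` at least as well as the corresponding `W i`.

Real-valued suprema of unbounded sets are `0`, so unbounded sets need a separate argument. If
`v₀, …, vₘ` are linearly independent, the `m`-dimensional spans obtained by omitting one `vⱼ` at a
time intersect trivially, and a set at bounded distance from each of them is bounded. Hence an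
unbounded set is at unbounded distance from some `m`-dimensional subspace, and its `m`-width, as
encoded here, is `0`.
-/

open Bornology Metric Module

section LinearAlgebra

theorem finrank_iSup_le_sum {𝕜 E ι : Type*} [Field 𝕜] [AddCommGroup E] [Module 𝕜 E] [Fintype ι]
    (W : ι → Submodule 𝕜 E) [∀ i, FiniteDimensional 𝕜 (W i)] :
    finrank 𝕜 (⨆ i, W i : Submodule 𝕜 E) ≤ ∑ i, finrank 𝕜 (W i) := by
  classical
  rw [← DirectSum.range_coeLinearMap, ← finrank_directSum]
  exact LinearMap.finrank_range_le _

theorem exists_submodule_ge_finrank_eq {𝕜 E : Type*} [Field 𝕜] [AddCommGroup E] [Module 𝕜 E]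
    (V : Submodule 𝕜 E) [FiniteDimensional 𝕜 V] {n : ℕ} (hVn : finrank 𝕜 V ≤ n)
    (hn : n ≤ Module.rank 𝕜 E) :
    ∃ W : Submodule 𝕜 E, V ≤ W ∧ FiniteDimensional 𝕜 W ∧ finrank 𝕜 W = n := by
  induction n, hVn using Nat.le_induction with
  | base => exact ⟨V, le_rfl, inferInstance, rfl⟩
  | succ n _ ih =>
    have n_lt_rank : (n : Cardinal) < Module.rank 𝕜 E :=
      (Nat.cast_lt.2 n.lt_succ_self).trans_le hn
    obtain ⟨W, hVW, _, hW⟩ := ih n_lt_rank.le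
    obtain ⟨x, hx⟩ : ∃ x, x ∉ W := by
      by_contra! h
      rw [← hW, finrank_eq_rank, Submodule.eq_top_iff'.2 h, rank_top] at n_lt_rank
      exact n_lt_rank.false
    have hx0 : x ≠ 0 := fun h => hx (h ▸ W.zero_mem)
    have disjoint_span : W ⊓ 𝕜 ∙ x = ⊥ :=
      ((Submodule.disjoint_span_singleton' hx0).2 hx).eq_bot
    have finrank_sup := Submodule.finrank_sup_add_finrank_inf_eq W (𝕜 ∙ x)
    rw [disjoint_span, finrank_bot, add_zero, hW, finrank_span_singleton hx0] at finrank_sup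
    exact ⟨W ⊔ 𝕜 ∙ x, hVW.trans le_sup_left, inferInstance, finrank_sup⟩

theorem iInf_span_image {R E ι κ : Type*} [Ring R] [AddCommGroup E] [Module R E] [Nonempty κ]
    {v : ι → E} (hv : LinearIndependent R v) (s : κ → Set ι) :
    ⨅ j, Submodule.span R (v '' s j) = Submodule.span R (v '' ⋂ j, s j) := by
  simp only [Finsupp.span_image_eq_map_linearCombination, Finsupp.supported_iInter]
  exact (Submodule.map_iInf _ hv).symm

theorem exists_finrank_eq_iInf_eq_bot {𝕜 E : Type*} [Field 𝕜] [AddCommGroup E] [Module 𝕜 E]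
    {n : ℕ} (hn : n < Module.rank 𝕜 E) :
    ∃ W : Fin (n + 1) → Submodule 𝕜 E,
      (∀ j, FiniteDimensional 𝕜 (W j)) ∧ (∀ j, finrank 𝕜 (W j) = n) ∧ ⨅ j, W j = ⊥ := by
  have succ_le_rank : ((n + 1 : ℕ) : Cardinal) ≤ Module.rank 𝕜 E := by
    exact_mod_cast Cardinal.add_one_le_of_lt hn
  obtain ⟨v, hv⟩ := exists_linearIndependent_of_le_rank succ_le_rank
  refine ⟨fun j => Submodule.span 𝕜 (Set.range (v ∘ j.succAbove)),
    fun j => FiniteDimensional.span_of_finite 𝕜 (Set.finite_range _), fun j => ?_, ?_⟩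
  · simpa using finrank_span_eq_card (hv.comp _ j.succAbove_right_injective)
  · simp only [Set.range_comp, Fin.range_succAbove, iInf_span_image hv]
    rw [← Set.compl_iUnion, Set.iUnion_of_singleton, Set.compl_univ, Set.image_empty,
      Submodule.span_empty]

end LinearAlgebra

section BoundedDistance

variable {𝕜 E ι : Type*} [NontriviallyNormedField 𝕜] [CompleteSpace 𝕜]
  [NormedAddCommGroup E] [NormedSpace 𝕜 E]

theorem exists_norm_le_mul_of_infDist_le [Finite ι] (F : Submodule 𝕜 E) [FiniteDimensional 𝕜 F]
    (H : ι → Submodule 𝕜 E) [∀ i, IsClosed (H i : Set E)] (hFH : Disjoint F (⨅ i, H i)) :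
    ∃ C : ℝ, ∀ x ∈ F, ∀ r, 0 ≤ r → (∀ i, infDist x (H i) ≤ r) → ‖x‖ ≤ C * r := by
  have := Fintype.ofFinite ι
  let toQuotients : F →ₗ[𝕜] ∀ i, E ⧸ H i := LinearMap.pi fun i => (H i).mkQ ∘ₗ F.subtype
  have ker_toQuotients : LinearMap.ker toQuotients = ⊥ := by
    refine (Submodule.eq_bot_iff _).2 fun x hx => Subtype.ext ?_
    refine Submodule.disjoint_def.1 hFH x x.2 ((Submodule.mem_iInf H).2 fun i => ?_)
    exact (Submodule.Quotient.mk_eq_zero (H i)).1 (congrFun hx i)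
  obtain ⟨C, -, hC⟩ := toQuotients.exists_antilipschitzWith ker_toQuotients
  refine ⟨C, fun x hx r hr hxr => ?_⟩
  have norm_toQuotients_le : ‖toQuotients ⟨x, hx⟩‖ ≤ r :=
    (pi_norm_le_iff_of_nonneg hr).2 fun i => (QuotientAddGroup.norm_mk x).trans_le (hxr i)
  calc ‖x‖ ≤ C * ‖toQuotients ⟨x, hx⟩‖ := ZeroHomClass.bound_of_antilipschitz toQuotients hC ⟨x, hx⟩
    _ ≤ C * r := by gcongr

theorem isBounded_of_bddAbove_infDist [Finite ι] (F : Submodule 𝕜 E) [FiniteDimensional 𝕜 F]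
    (H : ι → Submodule 𝕜 E) [∀ i, IsClosed (H i : Set E)] (hFH : Disjoint F (⨅ i, H i))
    {K : Set E} (hKF : BddAbove ((infDist · F) '' K))
    (hKH : ∀ i, BddAbove ((infDist · (H i)) '' K)) : IsBounded K := by
  obtain ⟨C, hC⟩ := exists_norm_le_mul_of_infDist_le F H hFH
  obtain ⟨a, ha⟩ := hKF
  choose b hb using hKH
  obtain ⟨B, hB⟩ := (Set.finite_range b).bddAbove
  refine isBounded_iff_forall_norm_le.2 ⟨C * (|B| + (a + 1)) + (a + 1), fun x hx => ?_⟩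
  have infDist_F_le : infDist x F ≤ a := ha (Set.mem_image_of_mem _ hx)
  obtain ⟨p, hpF, hxp⟩ := (infDist_lt_iff F.nonempty).1 (infDist_F_le.trans_lt (lt_add_one a))
  have infDist_H_le (i : ι) : infDist p (H i) ≤ |B| + (a + 1) :=
    calc infDist p (H i) ≤ infDist x (H i) + dist p x := infDist_le_infDist_add_dist
      _ ≤ |B| + (a + 1) := by
        gcongr
        · exact (hb i (Set.mem_image_of_mem _ hx)).trans
            ((hB (Set.mem_range_self i)).trans (le_abs_self B))
        · exact (dist_comm p x).trans_le hxp.le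
  have norm_p_le : ‖p‖ ≤ C * (|B| + (a + 1)) :=
    hC p hpF _ (add_nonneg (abs_nonneg B) (dist_nonneg.trans hxp.le)) infDist_H_le
  calc ‖x‖ ≤ ‖p‖ + ‖x - p‖ := norm_le_norm_add_norm_sub' x p
    _ ≤ C * (|B| + (a + 1)) + (a + 1) := add_le_add norm_p_le (dist_eq_norm x p ▸ hxp.le)

theorem exists_finrank_eq_not_bddAbove_infDist {n : ℕ} (hn : n < Module.rank 𝕜 E) {K : Set E}
    (hK : ¬ IsBounded K) :
    ∃ W : Submodule 𝕜 E, finrank 𝕜 W = n ∧ ¬ BddAbove ((infDist · W) '' K) := by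
  obtain ⟨W, _, finrank_W, iInf_W⟩ := exists_finrank_eq_iInf_eq_bot hn
  have (j : Fin (n + 1)) : IsClosed (W j : Set E) := (W j).closed_of_finiteDimensional
  by_contra! h
  exact hK <| isBounded_of_bddAbove_infDist (W 0) W (iInf_W ▸ disjoint_bot_right)
    (h _ (finrank_W 0)) fun j => h _ (finrank_W j)

end BoundedDistance

section Deviation

variable {X ι : Type*} [PseudoMetricSpace X]

/-- The deviation of `K` from `W`, the one-sided Hausdorff distance `sup_{x ∈ K} dist(x, W)`
minimised in the Kolmogorov width. As a real supremum it is `0` when the distances are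
unbounded. -/
noncomputable def deviation (K W : Set X) : ℝ :=
  sSup ((infDist · W) '' K)

theorem deviation_nonneg (K W : Set X) : 0 ≤ deviation K W := by
  refine Real.sSup_nonneg ?_
  rintro _ ⟨x, -, rfl⟩
  exact infDist_nonneg

theorem bddAbove_infDist_of_isBounded {K : Set X} (hK : IsBounded K) (W : Set X) :
    BddAbove ((infDist · W) '' K) :=
  ((lipschitz_infDist_pt W).isBounded_image hK).bddAbove

theorem infDist_le_deviation {K : Set X} (hK : IsBounded K) (W : Set X) {x : X} (hx : x ∈ K) :
    infDist x W ≤ deviation K W :=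
  le_csSup (bddAbove_infDist_of_isBounded hK W) (Set.mem_image_of_mem _ hx)

theorem deviation_iUnion_le_iSup [Finite ι] {A W : ι → Set X} {V : Set X}
    (hA : ∀ i, IsBounded (A i)) (hW : ∀ i, (W i).Nonempty) (hWV : ∀ i, W i ⊆ V) :
    deviation (⋃ i, A i) V ≤ ⨆ i, deviation (A i) (W i) := by
  refine Real.sSup_le ?_ (Real.iSup_nonneg fun i => deviation_nonneg _ _)
  rintro _ ⟨x, hx, rfl⟩
  obtain ⟨i, hxi⟩ := Set.mem_iUnion.1 hx
  calc infDist x V ≤ infDist x (W i) := infDist_le_infDist_of_subset (hWV i) (hW i)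
    _ ≤ deviation (A i) (W i) := infDist_le_deviation (hA i) _ hxi
    _ ≤ ⨆ i, deviation (A i) (W i) := 
      le_ciSup (f := fun i => deviation (A i) (W i)) (Set.finite_range _).bddAbove i

end Deviation

section KolWidth

variable {Y : Type*} [NormedAddCommGroup Y] [NormedSpace ℂ Y]

theorem kolWidth_eq_iInf_deviation (n : ℕ) (K : Set Y) :
    kolWidth n K = ⨅ W : {W : Submodule ℂ Y // finrank ℂ W = n}, deviation K W.1 := by
  simp only [kolWidth, deviation, sSup_image', infDist_eq_iInf, dist_eq_norm]
  rfl

theorem kolWidth_nonneg (n : ℕ) (K : Set Y) : 0 ≤ kolWidth n K := by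
  rw [kolWidth_eq_iInf_deviation]
  exact Real.iInf_nonneg fun W => deviation_nonneg _ _

theorem kolWidth_le_deviation {n : ℕ} (K : Set Y) {W : Submodule ℂ Y} (hW : finrank ℂ W = n) :
    kolWidth n K ≤ deviation K W := by
  rw [kolWidth_eq_iInf_deviation]
  refine ciInf_le (f := fun W : {W : Submodule ℂ Y // finrank ℂ W = n} => deviation K W.1)
    ⟨0, ?_⟩ ⟨W, hW⟩
  rintro _ ⟨V, rfl⟩
  exact deviation_nonneg _ _

theorem exists_deviation_lt_kolWidth_add {n : ℕ} (hn : n ≤ Module.rank ℂ Y) (K : Set Y)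
    {ε : ℝ} (hε : 0 < ε) :
    ∃ W : Submodule ℂ Y, finrank ℂ W = n ∧ deviation K W < kolWidth n K + ε := by
  obtain ⟨W₀, -, -, hW₀⟩ := exists_submodule_ge_finrank_eq (⊥ : Submodule ℂ Y) (by simp) hn
  have : Nonempty {W : Submodule ℂ Y // finrank ℂ W = n} := ⟨W₀, hW₀⟩
  rw [kolWidth_eq_iInf_deviation]
  obtain ⟨⟨W, hW⟩, hWK⟩ := exists_lt_of_ciInf_lt (lt_add_of_pos_right
    (⨅ W : {W : Submodule ℂ Y // finrank ℂ W = n}, deviation K W.1) hε)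
  exact ⟨W, hW, hWK⟩

theorem kolWidth_eq_zero_of_rank_lt {n : ℕ} (hn : Module.rank ℂ Y < n) (K : Set Y) :
    kolWidth n K = 0 := by
  have : FiniteDimensional ℂ Y := rank_lt_aleph0_iff.1 (hn.trans Cardinal.natCast_lt_aleph0)
  have : IsEmpty {W : Submodule ℂ Y // finrank ℂ W = n} := by
    refine ⟨fun ⟨W, hW⟩ => ?_⟩
    rw [← hW, finrank_eq_rank] at hn
    exact (Submodule.rank_le W).not_gt hn
  exact Real.iInf_of_isEmpty _

/-- As `finrank` is `0` in infinite dimension, the `0`-width of every set is `0` there. -/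
theorem kolWidth_finrank (K : Set Y) : kolWidth (finrank ℂ Y) K = 0 := by
  refine ((kolWidth_le_deviation K (finrank_top ℂ Y)).trans ?_).antisymm (kolWidth_nonneg _ _)
  refine Real.sSup_le ?_ le_rfl
  rintro _ ⟨x, -, rfl⟩
  exact (infDist_zero_of_mem Submodule.mem_top).le

theorem kolWidth_eq_zero_of_not_isBounded (n : ℕ) {K : Set Y} (hK : ¬ IsBounded K) :
    kolWidth n K = 0 := by
  rcases lt_trichotomy (Module.rank ℂ Y) n with rank_lt | rank_eq | lt_rank
  · exact kolWidth_eq_zero_of_rank_lt rank_lt K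
  · exact finrank_eq_of_rank_eq rank_eq ▸ kolWidth_finrank K
  · obtain ⟨W, hW, not_bddAbove⟩ := exists_finrank_eq_not_bddAbove_infDist lt_rank hK
    refine ((kolWidth_le_deviation K hW).trans_eq ?_).antisymm (kolWidth_nonneg _ _)
    exact Real.sSup_of_not_bddAbove not_bddAbove

theorem kolWidth_sum_iUnion_le_iSup {ι : Type*} [Fintype ι] (n : ι → ℕ)
    (hn : ∀ i, n i = 0 → FiniteDimensional ℂ Y) (A : ι → Set Y) :
    kolWidth (∑ i, n i) (⋃ i, A i) ≤ ⨆ i, kolWidth (n i) (A i) := by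
  have iSup_nonneg : 0 ≤ ⨆ i, kolWidth (n i) (A i) :=
    Real.iSup_nonneg fun i => kolWidth_nonneg _ _
  by_cases hA : IsBounded (⋃ i, A i)
  swap
  · exact (kolWidth_eq_zero_of_not_isBounded _ hA).trans_le iSup_nonneg
  rcases lt_or_ge (Module.rank ℂ Y) (∑ i, n i : ℕ) with rank_lt | le_rank
  · exact (kolWidth_eq_zero_of_rank_lt rank_lt _).trans_le iSup_nonneg
  refine le_of_forall_pos_le_add fun ε hε => ?_
  have n_le_rank (i : ι) : n i ≤ Module.rank ℂ Y :=
    (Nat.cast_le.2 (Finset.single_le_sum_of_canonicallyOrdered (Finset.mem_univ i))).trans le_rank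
  choose W finrank_W deviation_W using fun i =>
    exists_deviation_lt_kolWidth_add (n_le_rank i) (A i) hε
  have (i : ι) : FiniteDimensional ℂ (W i) := by
    rcases Nat.eq_zero_or_pos (n i) with h0 | hpos
    · have := hn i h0
      infer_instance
    · exact finite_of_finrank_pos (finrank_W i ▸ hpos)
  have finrank_iSup : finrank ℂ (⨆ i, W i : Submodule ℂ Y) ≤ ∑ i, n i := by
    simpa only [finrank_W] using finrank_iSup_le_sum W
  obtain ⟨V, hWV, -, finrank_V⟩ := exists_submodule_ge_finrank_eq (⨆ i, W i) finrank_iSup le_rank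
  calc kolWidth (∑ i, n i) (⋃ i, A i) ≤ deviation (⋃ i, A i) V := kolWidth_le_deviation _ finrank_V
    _ ≤ ⨆ i, deviation (A i) (W i) :=
      deviation_iUnion_le_iSup (fun i => hA.subset (Set.subset_iUnion A i))
        (fun i => (W i).nonempty) fun i => (le_iSup W i).trans hWV
    _ ≤ (⨆ i, kolWidth (n i) (A i)) + ε := by
      refine Real.iSup_le (fun i => (deviation_W i).le.trans ?_) (by positivity)
      gcongr
      exact le_ciSup (f := fun i => kolWidth (n i) (A i)) (Set.finite_range _).bddAbove i

end KolWidth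

/-- Kolmogorov widths of finite unions: for subsets `A_1, …, A_M` of a normed space `Y`
(`M ≥ 1`) and any `n ≥ 0`, `d_{M·n}(A_1 ∪ ⋯ ∪ A_M) ≤ max_{1 ≤ i ≤ M} d_n(A_i)`. -/
theorem kolWidth_iUnion_le_max
    {Y : Type*} [NormedAddCommGroup Y] [NormedSpace ℂ Y]
    (M : ℕ) (hM : 1 ≤ M) (n : ℕ) (A : Fin M → Set Y) :
    kolWidth (M * n) (⋃ i, A i) ≤ ⨆ i : Fin M, kolWidth n (A i) := by
  by_cases hn : n = 0 → FiniteDimensional ℂ Y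
  · simpa using kolWidth_sum_iUnion_le_iSup (fun _ => n) (fun _ => hn) A
  · obtain ⟨rfl, hY⟩ := Classical.not_imp.1 hn
    have kolWidth_zero (K : Set Y) : kolWidth 0 K = 0 :=
      finrank_of_not_finite hY ▸ kolWidth_finrank K
    simp [kolWidth_zero]
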